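/- Let p ∈ (1,2) and let ν be a probability measure on 𝕋 with a density (still denoted ν) with respect to λ that is a-Hölder with constant A, i.e. |ν(x)−ν(y)| ≤ A d(x,y)^a for all x,y, where a ∈ (0,1] and A > 0. Then there exist constants σ ∈ (0,1/2) and C > 0, depending only on p and A, such that for every β ≥ 1 and every α ∈ (0, σ β^{−2}) there exists a bounded measurable function h : 𝕋 → ℝ with ∫_𝕋 L_{α,β}φ dμ_β = ∫_𝕋 φ·h dμ_β for all φ ∈ C²(𝕋), and with ess sup_x |h(x)| ≤ C·max(αβ⁴, α^{p−1}β^{1+p}, α^a β^{1+a}). -/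

import Mathlib

open MeasureTheory Real Set Filter

noncomputable section

instance : Fact (0 < 2 * π) := ⟨Real.two_pi_pos⟩

/-- The circle `𝕋 = ℝ/(2πℤ)`. -/
abbrev 𝕋 : Type := AddCircle (2 * π)

/-- The normalized Haar probability measure `λ` on the circle. -/
def lam : Measure 𝕋 := (ENNReal.ofReal (2 * π))⁻¹ • volume

/-- The representative of a point of the circle in `(-π, π]`. -/
def rep (z : 𝕋) : ℝ := ((AddCircle.equivIoc (2 * π) (-π) z : Set.Ioc (-π) (-π + 2 * π)) : ℝ)

/-- `σ(x,y) = +1` if the representative of `y - x` lies in `[0, π]`, `-1` otherwise. -/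
def sgn (x y : 𝕋) : ℝ := if 0 ≤ rep (y - x) then 1 else -1

/-- The potential `U_p(x) = ∫ d(x,y)^p ν(dy)`. -/
def Up (p : ℝ) (ν : Measure 𝕋) (x : 𝕋) : ℝ := ∫ y, dist x y ^ p ∂ν

/-- The normalizing constant `Z_β = ∫ exp(-β U_p) dλ`. -/
def Zp (p : ℝ) (ν : Measure 𝕋) (β : ℝ) : ℝ := ∫ x, Real.exp (-β * Up p ν x) ∂lam

/-- The Gibbs measure `μ_β` with density `exp(-β U_p)/Z_β` w.r.t. `λ`. -/
def gibbsp (p : ℝ) (ν : Measure 𝕋) (β : ℝ) : Measure 𝕋 :=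
  lam.withDensity fun x => ENNReal.ofReal (Real.exp (-β * Up p ν x) / Zp p ν β)

/-- The generator, acting on (the periodic lift) `φ` of a `C²` function on `𝕋`:
`L_{α,β}φ(x) = ½ φ''(x) + α⁻¹ ∫ [φ(x + (p/2)αβ d(x,y)^{p-1} σ(x,y)) - φ(x)] ν(dy)`. -/
def genp (p : ℝ) (ν : Measure 𝕋) (α β : ℝ) (φ : ℝ → ℝ) (z : 𝕋) : ℝ :=
  (1 / 2) * deriv (deriv φ) (rep z)
    + α⁻¹ * ∫ y, (φ (rep z + p / 2 * α * β * dist z y ^ (p - 1) * sgn z y) - φ (rep z)) ∂ν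

/-- signed power -/
def sp (p w : ℝ) : ℝ := max w 0 ^ (p - 1) - max (-w) 0 ^ (p - 1)

/-- derivative of the signed power -/
def ds (p w : ℝ) : ℝ := (p - 1) * |w| ^ (p - 2)

lemma sp_cont {p : ℝ} (hp1 : 1 < p) : Continuous (sp p) := by
  unfold sp
  refine Continuous.sub ?_ ?_
  · exact (continuous_id.max continuous_const).rpow_const (fun _ => Or.inr (by linarith))
  · exact (continuous_id.neg.max continuous_const).rpow_const (fun _ => Or.inr (by linarith))

lemma sp_of_nonneg {p w : ℝ} (hp1 : 1 < p) (hw : 0 ≤ w) : sp p w = w ^ (p - 1) := by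
  unfold sp
  rw [max_eq_left hw, max_eq_right (by linarith), Real.zero_rpow (by linarith), sub_zero]

lemma sp_neg {p w : ℝ} : sp p (-w) = - sp p w := by
  unfold sp; rw [neg_neg]; ring

lemma sp_of_nonpos {p w : ℝ} (hp1 : 1 < p) (hw : w ≤ 0) : sp p w = - (-w) ^ (p - 1) := by
  have := sp_of_nonneg hp1 (w := -w) (by linarith)
  rw [sp_neg] at this; linarith

lemma abs_sp {p w : ℝ} (hp1 : 1 < p) : |sp p w| = |w| ^ (p - 1) := by
  rcases le_total 0 w with h | h
  · rw [sp_of_nonneg hp1 h, abs_of_nonneg h, abs_of_nonneg (Real.rpow_nonneg h _)]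
  · rw [sp_of_nonpos hp1 h, abs_of_nonpos h, abs_neg, abs_of_nonneg (Real.rpow_nonneg (by linarith) _)]

lemma pi_pow_le {p : ℝ} (hp1 : 1 < p) (hp2 : p < 2) : π ^ (p - 1) ≤ π := by
  have h1 : (1 : ℝ) ≤ π := by linarith [Real.pi_gt_three]
  calc π ^ (p - 1) ≤ π ^ (1 : ℝ) := Real.rpow_le_rpow_of_exponent_le h1 (by linarith)
    _ = π := Real.rpow_one _

lemma abs_sp_le {p w : ℝ} (hp1 : 1 < p) (hp2 : p < 2) (hw : |w| ≤ π) : |sp p w| ≤ π := by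
  rw [abs_sp hp1]
  exact (Real.rpow_le_rpow (abs_nonneg _) hw (by linarith)).trans (pi_pow_le hp1 hp2)

lemma sp_deriv {p w : ℝ} (hp1 : 1 < p) (hw : w ≠ 0) : HasDerivAt (sp p) (ds p w) w := by
  rcases lt_or_gt_of_ne hw with h | h
  · have h1 : HasDerivAt (fun w : ℝ => - (-w) ^ (p - 1)) (ds p w) w := by
      have := ((hasDerivAt_id w).neg.rpow_const (p := p - 1) (Or.inl (by simpa using hw))).neg
      refine this.congr_deriv ?_
      unfold ds
      rw [abs_of_neg h]
      simp only [Pi.neg_apply, id]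
      rw [show p - 1 - 1 = p - 2 by ring]; ring
    refine h1.congr_of_eventuallyEq ?_
    filter_upwards [Iio_mem_nhds h] with x hx
    exact sp_of_nonpos hp1 (le_of_lt hx)
  · have h1 : HasDerivAt (fun w : ℝ => w ^ (p - 1)) (ds p w) w := by
      have := ((hasDerivAt_id w).rpow_const (p := p - 1) (Or.inl (by simpa using hw)))
      refine this.congr_deriv ?_
      unfold ds
      rw [abs_of_pos h]
      simp only [id]
      rw [show p - 1 - 1 = p - 2 by ring]; ring
    refine h1.congr_of_eventuallyEq ?_
    filter_upwards [Ioi_mem_nhds h] with x hx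
    exact sp_of_nonneg hp1 (le_of_lt hx)

lemma abspow_deriv {p w : ℝ} (hp1 : 1 < p) (hw : w ≠ 0) :
    HasDerivAt (fun w : ℝ => |w| ^ p) (p * sp p w) w := by
  rcases lt_or_gt_of_ne hw with h | h
  · have h1 : HasDerivAt (fun w : ℝ => (-w) ^ p) (p * sp p w) w := by
      have := ((hasDerivAt_id w).neg.rpow_const (p := p) (Or.inl (by simpa using hw)))
      refine this.congr_deriv ?_
      rw [sp_of_nonpos hp1 h.le]
      simp only [Pi.neg_apply, id]
      ring
    refine h1.congr_of_eventuallyEq ?_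
    filter_upwards [Iio_mem_nhds h] with x hx
    rw [abs_of_neg hx]
  · have h1 : HasDerivAt (fun w : ℝ => w ^ p) (p * sp p w) w := by
      have := ((hasDerivAt_id w).rpow_const (p := p) (Or.inl (by simpa using hw)))
      refine this.congr_deriv ?_
      rw [sp_of_nonneg hp1 h.le]
      simp only [id]
      ring
    refine h1.congr_of_eventuallyEq ?_
    filter_upwards [Ioi_mem_nhds h] with x hx
    rw [abs_of_pos hx]

lemma ds_nonneg {p w : ℝ} (hp1 : 1 < p) : 0 ≤ ds p w :=
  mul_nonneg (by linarith) (Real.rpow_nonneg (abs_nonneg _) _)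

lemma ds_int {p : ℝ} (hp1 : 1 < p) : IntervalIntegrable (ds p) volume (-π) π := by
  have h0 : IntervalIntegrable (ds p) volume 0 π := by
    unfold ds
    refine IntervalIntegrable.const_mul ?_ _
    refine (intervalIntegral.intervalIntegrable_rpow' (r := p - 2) (by linarith)).congr ?_
    intro x hx
    rw [uIoc_of_le Real.pi_pos.le] at hx
    simp only
    rw [abs_of_pos hx.1]
  have h1 : IntervalIntegrable (ds p) volume (-π) 0 := by
    have := (h0.comp_sub_left 0).symm
    simp only [zero_sub, sub_zero] at this
    refine this.congr ?_
    intro x _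
    simp [ds]
  exact h1.trans h0

lemma ds_integral {p : ℝ} (hp1 : 1 < p) : ∫ w in (-π)..π, ds p w = 2 * π ^ (p - 1) := by
  rw [integral_eq_of_hasDerivAt_off_countable (sp p) (ds p) (s := {0}) (by simp)
    (sp_cont hp1).continuousOn (fun x hx => sp_deriv hp1 hx.2) (ds_int hp1), sp_neg,
    sp_of_nonneg hp1 Real.pi_pos.le]
  ring

/-- primitive -/
def prim (G : ℝ → ℝ) (x : ℝ) : ℝ := ∫ t in (0 : ℝ)..x, G t

lemma prim_deriv {G : ℝ → ℝ} (hG : Continuous G) (x : ℝ) : HasDerivAt (prim G) (G x) x :=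
  intervalIntegral.integral_hasDerivAt_right (hG.intervalIntegrable _ _)
    (hG.stronglyMeasurableAtFilter _ _) hG.continuousAt

lemma prim_cont {G : ℝ → ℝ} (hG : Continuous G) : Continuous (prim G) :=
  continuous_iff_continuousAt.2 fun x => (prim_deriv hG x).continuousAt

lemma prim_sub {G : ℝ → ℝ} (hG : Continuous G) (x y : ℝ) :
    prim G y - prim G x = ∫ t in x..y, G t := by
  unfold prim
  exact intervalIntegral.integral_interval_sub_left (hG.intervalIntegrable _ _)
    (hG.intervalIntegrable _ _)

lemma prim_lip {G : ℝ → ℝ} (hG : Continuous G) {M : ℝ} (hM : ∀ x, |G x| ≤ M) (x y : ℝ) :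
    |prim G y - prim G x| ≤ M * |y - x| := by
  rw [prim_sub hG]
  exact intervalIntegral.norm_integral_le_of_norm_le_const (f := G) (C := M) (fun t _ => hM t)

lemma prim_taylor {G : ℝ → ℝ} (hG : Continuous G) {A a : ℝ} (hA : 0 < A) (ha : 0 < a)
    (hH : ∀ x y, |G x - G y| ≤ A * |x - y| ^ a) (x t : ℝ) :
    |prim G (x + t) - prim G x - t * G x| ≤ A * |t| ^ a * |t| := by
  have h1 : prim G (x + t) - prim G x - t * G x = ∫ u in x..(x + t), (G u - G x) := by
    rw [intervalIntegral.integral_sub (hG.intervalIntegrable _ _) (by simp), ← prim_sub hG]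
    simp
  rw [h1]
  have := intervalIntegral.norm_integral_le_of_norm_le_const (a := x) (b := x + t)
    (f := fun u => G u - G x) (C := A * |t| ^ a) (fun u hu => by
      refine (hH u x).trans ?_
      have := abs_sub_left_of_mem_uIcc (uIoc_subset_uIcc hu)
      rw [add_sub_cancel_left] at this
      exact mul_le_mul_of_nonneg_left (Real.rpow_le_rpow (abs_nonneg _) this ha.le) hA.le)
  simpa using this

lemma ibp {G : ℝ → ℝ} (hG : Continuous G) {p : ℝ} (hp1 : 1 < p) (e x : ℝ) {K k : ℝ → ℝ}
    (hK : Continuous K) (hk : ∀ w, w ≠ 0 → HasDerivAt K (k w) w)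
    (hki : IntervalIntegrable k volume (-π) π) :
    (∫ w in (-π)..π, K w * G (x + w - e * sp p w))
      = K π * prim G (x + π - e * π ^ (p - 1)) - K (-π) * prim G (x - π + e * π ^ (p - 1))
        - (∫ w in (-π)..π, k w * prim G (x + w - e * sp p w))
        + e * ∫ w in (-π)..π, ds p w * (K w * G (x + w - e * sp p w)) := by
  have hs := sp_cont hp1
  have hc : Continuous fun w => x + w - e * sp p w := by fun_prop
  have hGc := hG.comp hc
  have hPc := (prim_cont hG).comp hc
  have i1 : IntervalIntegrable (fun w => K w * G (x + w - e * sp p w)) volume (-π) π :=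
    (hK.mul hGc).intervalIntegrable _ _
  have i2 : IntervalIntegrable (fun w => k w * prim G (x + w - e * sp p w)) volume (-π) π :=
    hki.mul_continuousOn hPc.continuousOn
  have i3 : IntervalIntegrable (fun w => ds p w * (K w * G (x + w - e * sp p w))) volume (-π) π :=
    (ds_int hp1).mul_continuousOn (hK.mul hGc).continuousOn
  have key := integral_eq_of_hasDerivAt_off_countable
    (fun w => K w * prim G (x + w - e * sp p w))
    (fun w => K w * G (x + w - e * sp p w) + k w * prim G (x + w - e * sp p w)
      - e * (ds p w * (K w * G (x + w - e * sp p w)))) (a := -π) (b := π) (s := {0}) (by simp)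
    (hK.mul hPc).continuousOn (fun w hw => by
      have h0 : w ≠ 0 := hw.2
      have h2 : HasDerivAt (fun w => x + w - e * sp p w) (1 - e * ds p w) w :=
        ((hasDerivAt_id w).const_add x).sub ((sp_deriv hp1 h0).const_mul e)
      have h3 := (hk w h0).mul ((prim_deriv hG _).comp w h2)
      refine h3.congr_deriv ?_
      simp only [Function.comp]
      ring) ((i1.add i2).sub (i3.const_mul e))
  rw [intervalIntegral.integral_sub (i1.add i2) (i3.const_mul e),
    intervalIntegral.integral_add i1 i2, intervalIntegral.integral_const_mul] at key
  simp only [sp_neg, sp_of_nonneg hp1 Real.pi_pos.le] at key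
  rw [show x + -π - e * -π ^ (p - 1) = x - π + e * π ^ (p - 1) by ring] at key
  linarith

lemma conv_deriv {G : ℝ → ℝ} (hG : Continuous G) {M : ℝ} (hM : ∀ x, |G x| ≤ M) {K k : ℝ → ℝ}
    (hK : Continuous K) (hk : ∀ w, w ≠ 0 → HasDerivAt K (k w) w)
    (hki : IntervalIntegrable k volume (-π) π) (x : ℝ) :
    HasDerivAt (fun x => ∫ w in (-π)..π, K w * G (x + w))
      (K π * G (x + π) - K (-π) * G (x - π) - ∫ w in (-π)..π, k w * G (x + w)) x := by
  have hf : (fun x => ∫ w in (-π)..π, K w * G (x + w)) = fun x =>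
      K π * prim G (x + π) - K (-π) * prim G (x - π) - ∫ w in (-π)..π, k w * prim G (x + w) := by
    funext x
    have := ibp hG (p := 3 / 2) (by norm_num) 0 x hK hk hki
    simpa using this
  rw [hf]
  have d1 : HasDerivAt (fun x => prim G (x + π)) (G (x + π)) x := by
    exact (prim_deriv hG (x + π)).comp_add_const x π
  have d2 : HasDerivAt (fun x => prim G (x - π)) (G (x - π)) x := by
    exact (prim_deriv hG (x - π)).comp_sub_const x π
  refine ((d1.const_mul _).sub (d2.const_mul _)).sub ?_
  have hP := prim_cont hG
  have hi : ∀ x, IntervalIntegrable (fun w => k w * prim G (x + w)) volume (-π) π := fun x =>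
    hki.mul_continuousOn (by fun_prop)
  have hi' : IntervalIntegrable (fun w => k w * G (x + w)) volume (-π) π :=
    hki.mul_continuousOn (by fun_prop)
  refine (intervalIntegral.hasDerivAt_integral_of_dominated_loc_of_deriv_le
    (bound := fun w => |k w| * M) (F' := fun x w => k w * G (x + w)) (s := univ) univ_mem
    (Eventually.of_forall fun x => (hi x).aestronglyMeasurable_restrict_uIoc) (hi x)
    hi'.aestronglyMeasurable_restrict_uIoc ?_ ?_ ?_).2
  · refine Eventually.of_forall fun w _ x _ => ?_
    rw [norm_mul]
    exact mul_le_mul_of_nonneg_left (hM _) (abs_nonneg _)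
  · exact hki.abs.mul_const _
  · refine Eventually.of_forall fun w _ x _ => ?_
    have : HasDerivAt (fun x => prim G (x + w)) (G (x + w)) x := by
      exact (prim_deriv hG (x + w)).comp_add_const x w
    exact this.const_mul _

/-- potential on the line -/
def VV (p : ℝ) (G : ℝ → ℝ) (x : ℝ) : ℝ := (2 * π)⁻¹ * ∫ w in (-π)..π, |w| ^ p * G (x + w)

/-- first derivative of the potential -/
def D1 (p : ℝ) (G : ℝ → ℝ) (x : ℝ) : ℝ := (2 * π)⁻¹ * (-(p * ∫ w in (-π)..π, sp p w * G (x + w)))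

/-- second derivative of the potential -/
def D2 (p : ℝ) (G : ℝ → ℝ) (x : ℝ) : ℝ :=
  (2 * π)⁻¹ * (p * ((∫ w in (-π)..π, ds p w * G (x + w)) - 2 * π ^ (p - 1) * G (x + π)))

lemma abspow_cont {p : ℝ} (hp1 : 1 < p) : Continuous fun w : ℝ => |w| ^ p :=
  continuous_abs.rpow_const fun _ => Or.inr (by linarith)

lemma VV_deriv {p : ℝ} (hp1 : 1 < p) {G : ℝ → ℝ} (hG : Continuous G) {M : ℝ}
    (hM : ∀ x, |G x| ≤ M) (hper : Function.Periodic G (2 * π)) (x : ℝ) :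
    HasDerivAt (VV p G) (D1 p G x) x := by
  have h := (conv_deriv hG hM (abspow_cont hp1) (fun w hw => abspow_deriv hp1 hw)
    (((sp_cont hp1).const_mul p).intervalIntegrable _ _) x).const_mul ((2 * π)⁻¹)
  refine h.congr_deriv ?_
  unfold D1
  have h1 : G (x + π) = G (x - π) := by
    rw [← hper (x - π)]; congr 1; ring
  rw [abs_neg, h1, ← intervalIntegral.integral_const_mul]
  simp only [mul_assoc]
  ring

lemma D1_deriv {p : ℝ} (hp1 : 1 < p) {G : ℝ → ℝ} (hG : Continuous G) {M : ℝ}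
    (hM : ∀ x, |G x| ≤ M) (hper : Function.Periodic G (2 * π)) (x : ℝ) :
    HasDerivAt (D1 p G) (D2 p G x) x := by
  have h := ((conv_deriv hG hM (sp_cont hp1) (fun w hw => sp_deriv hp1 hw)
    (ds_int hp1) x).const_mul p).neg.const_mul ((2 * π)⁻¹)
  refine h.congr_deriv ?_
  unfold D2
  have h1 : G (x + π) = G (x - π) := by
    rw [← hper (x - π)]; congr 1; ring
  rw [sp_neg, h1, sp_of_nonneg hp1 Real.pi_pos.le]
  ring

lemma D2_cont {p : ℝ} (hp1 : 1 < p) {G : ℝ → ℝ} (hG : Continuous G) {M : ℝ}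
    (hM : ∀ x, |G x| ≤ M) : Continuous (D2 p G) := by
  unfold D2
  have : Continuous fun x => ∫ w in (-π)..π, ds p w * G (x + w) := by
    refine intervalIntegral.continuous_of_dominated_interval (bound := fun w => |ds p w| * M)
      (fun x => ?_) (fun x => ?_) ?_ ?_
    · exact ((ds_int hp1).mul_continuousOn
        (by fun_prop : ContinuousOn (fun w => G (x + w)) _)).aestronglyMeasurable_restrict_uIoc
    · refine Eventually.of_forall fun w _ => ?_
      rw [norm_mul]
      exact mul_le_mul_of_nonneg_left (hM _) (abs_nonneg _)
    · exact (ds_int hp1).abs.mul_const _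
    · exact Eventually.of_forall fun w _ => by fun_prop
  fun_prop

lemma abs_ds_int_le {p : ℝ} (hp1 : 1 < p) {f : ℝ → ℝ} {c : ℝ}
    (hc : ∀ w ∈ Icc (-π) π, |f w| ≤ c) :
    |∫ w in (-π)..π, ds p w * f w| ≤ 2 * π ^ (p - 1) * c := by
  have hle : -π ≤ π := by linarith [Real.pi_pos]
  have := intervalIntegral.norm_integral_le_of_norm_le (μ := volume) hle
    (f := fun w => ds p w * f w) (g := fun w => ds p w * c)
    (Eventually.of_forall fun w hw => by
      rw [norm_mul, Real.norm_of_nonneg (ds_nonneg hp1)]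
      exact mul_le_mul_of_nonneg_left (hc w (Ioc_subset_Icc_self hw)) (ds_nonneg hp1))
    ((ds_int hp1).mul_const c)
  rw [intervalIntegral.integral_mul_const, ds_integral hp1] at this
  exact this

lemma abs_int_le {f : ℝ → ℝ} {c : ℝ}
    (hc : ∀ w ∈ Icc (-π) π, |f w| ≤ c) :
    |∫ w in (-π)..π, f w| ≤ 2 * π * c := by
  have hle : -π ≤ π := by linarith [Real.pi_pos]
  have := intervalIntegral.norm_integral_le_of_norm_le_const (f := f) (C := c) (a := -π) (b := π)
    (fun w hw => hc w (Ioc_subset_Icc_self (by rwa [uIoc_of_le hle] at hw)))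
  rw [abs_of_nonneg (by linarith [Real.pi_pos])] at this
  calc _ ≤ _ := this
    _ = _ := by ring

lemma D1_bound {p : ℝ} (hp1 : 1 < p) (hp2 : p < 2) {G : ℝ → ℝ} {M : ℝ}
    (hM : ∀ x, |G x| ≤ M) (x : ℝ) : |D1 p G x| ≤ 2 * π * M := by
  have hpi := Real.pi_pos
  have hM0 : 0 ≤ M := (abs_nonneg _).trans (hM 0)
  have h1 : |∫ w in (-π)..π, sp p w * G (x + w)| ≤ 2 * π * (π * M) := abs_int_le fun w hw => by
    rw [abs_mul]
    exact mul_le_mul (abs_sp_le hp1 hp2 (abs_le.2 hw)) (hM _) (abs_nonneg _) hpi.le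
  unfold D1
  rw [abs_mul, abs_neg, abs_mul, abs_of_pos (by positivity : 0 < (2 * π)⁻¹), abs_of_pos (by linarith : 0 < p)]
  calc (2 * π)⁻¹ * (p * |∫ w in (-π)..π, sp p w * G (x + w)|)
      ≤ (2 * π)⁻¹ * (2 * (2 * π * (π * M))) := by gcongr
    _ = 2 * π * M := by field_simp

lemma D2_bound {p : ℝ} (hp1 : 1 < p) (hp2 : p < 2) {G : ℝ → ℝ} {M : ℝ}
    (hM : ∀ x, |G x| ≤ M) (x : ℝ) : |D2 p G x| ≤ 4 * M := by
  have hpi := Real.pi_pos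
  have hM0 : 0 ≤ M := (abs_nonneg _).trans (hM 0)
  have hpp := pi_pow_le hp1 hp2
  have hp0 : 0 ≤ π ^ (p - 1) := by positivity
  have h1 : |∫ w in (-π)..π, ds p w * G (x + w)| ≤ 2 * π ^ (p - 1) * M :=
    abs_ds_int_le hp1 fun w hw => hM _
  have h2 : |2 * π ^ (p - 1) * G (x + π)| ≤ 2 * π ^ (p - 1) * M := by
    rw [abs_mul, abs_of_nonneg (by positivity)]
    exact mul_le_mul_of_nonneg_left (hM _) (by positivity)
  have h3 : |(∫ w in (-π)..π, ds p w * G (x + w)) - 2 * π ^ (p - 1) * G (x + π)| ≤ 4 * π * M := by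
    refine (abs_sub _ _).trans ?_
    nlinarith
  unfold D2
  rw [abs_mul, abs_mul, abs_of_pos (by positivity : 0 < (2 * π)⁻¹), abs_of_pos (by linarith : 0 < p)]
  calc (2 * π)⁻¹ * (p * _)
      ≤ (2 * π)⁻¹ * (2 * (4 * π * M)) := by gcongr
    _ = 4 * M := by field_simp

lemma T0_bound {p : ℝ} (hp1 : 1 < p) (hp2 : p < 2) {G : ℝ → ℝ} (hG : Continuous G)
    (hper : Function.Periodic G (2 * π))
    {A a : ℝ} (hA : 0 < A) (ha : 0 < a) (ha1 : a ≤ 1)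
    (hH : ∀ x y, |G x - G y| ≤ A * |x - y| ^ a) (x : ℝ) {e : ℝ} (he : 0 < e) :
    |(∫ w in (-π)..π, G (x + w - e * sp p w)) - (∫ w in (-π)..π, G (x + w))
      - e * ((∫ w in (-π)..π, ds p w * G (x + w)) - 2 * π ^ (p - 1) * G (x + π))|
      ≤ 4 * A * π ^ 2 * (e * e ^ a) := by
  have hpi := Real.pi_pos
  have hpi3 := Real.pi_gt_three
  have hpp := pi_pow_le hp1 hp2
  have hp0 : 0 ≤ π ^ (p - 1) := by positivity
  have hs := sp_cont hp1
  have e1 := ibp hG hp1 e x (K := fun _ => 1) (k := fun _ => 0) continuous_const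
    (fun w _ => hasDerivAt_const w (1 : ℝ)) (by simp)
  have e2 := ibp hG hp1 0 x (K := fun _ => 1) (k := fun _ => 0) continuous_const
    (fun w _ => hasDerivAt_const w (1 : ℝ)) (by simp)
  simp only [one_mul, zero_mul, intervalIntegral.integral_zero, sub_zero, add_zero] at e1 e2
  have h1 : G (x + π) = G (x - π) := by
    rw [← hper (x - π)]; congr 1; ring
  have t1 := prim_taylor hG hA ha hH (x + π) (-(e * π ^ (p - 1)))
  have t2 := prim_taylor hG hA ha hH (x - π) (e * π ^ (p - 1))
  rw [← sub_eq_add_neg, abs_neg] at t1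
  have hepow : ∀ c, 0 ≤ c → c ≤ π → (e * c) ^ a ≤ e ^ a * π := by
    intro c hc hcp
    rw [Real.mul_rpow he.le hc]
    refine mul_le_mul_of_nonneg_left ?_ (by positivity)
    calc c ^ a ≤ π ^ a := Real.rpow_le_rpow hc hcp ha.le
      _ ≤ π ^ (1 : ℝ) := Real.rpow_le_rpow_of_exponent_le (by linarith) ha1
      _ = π := Real.rpow_one _
  have hb : A * |e * π ^ (p - 1)| ^ a * |e * π ^ (p - 1)| ≤ A * (e ^ a * π) * (e * π) := by
    rw [abs_of_nonneg (by positivity)]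
    have := hepow _ hp0 hpp
    gcongr
  have hd : |∫ w in (-π)..π, ds p w * (G (x + w - e * sp p w) - G (x + w))|
      ≤ 2 * π ^ (p - 1) * (A * (e ^ a * π)) := abs_ds_int_le hp1 fun w hw => by
    refine (hH _ _).trans ?_
    have hsw := abs_sp_le hp1 hp2 (abs_le.2 hw)
    have := hepow _ (abs_nonneg _) hsw
    rw [show x + w - e * sp p w - (x + w) = - (e * sp p w) by ring, abs_neg, abs_mul,
      abs_of_pos he]
    gcongr
  have hsplit : (∫ w in (-π)..π, ds p w * (G (x + w - e * sp p w) - G (x + w)))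
      = (∫ w in (-π)..π, ds p w * G (x + w - e * sp p w)) - ∫ w in (-π)..π, ds p w * G (x + w) := by
    simp only [mul_sub]
    exact intervalIntegral.integral_sub ((ds_int hp1).mul_continuousOn (by fun_prop))
      ((ds_int hp1).mul_continuousOn (by fun_prop))
  have hd2 : |e * ∫ w in (-π)..π, ds p w * (G (x + w - e * sp p w) - G (x + w))|
      ≤ 2 * A * π ^ 2 * (e * e ^ a) := by
    rw [abs_mul, abs_of_pos he]
    calc _ ≤ e * (2 * π * (A * (e ^ a * π))) := by
            refine mul_le_mul_of_nonneg_left (hd.trans ?_) he.le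
            gcongr
      _ = _ := by ring
  rw [hsplit] at hd2
  rw [e1, e2]
  rw [h1] at t1 ⊢
  rw [abs_le] at *
  constructor <;> nlinarith

lemma T1_bound {p : ℝ} (hp1 : 1 < p) (hp2 : p < 2) {G : ℝ → ℝ} (hG : Continuous G)
    {M : ℝ} (hM : ∀ x, |G x| ≤ M) (x : ℝ) {e : ℝ} (he : 0 < e) :
    |(∫ w in (-π)..π, sp p w * G (x + w - e * sp p w)) - (∫ w in (-π)..π, sp p w * G (x + w))|
      ≤ 6 * π ^ 2 * M * e := by
  have hpi := Real.pi_pos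
  have hM0 : 0 ≤ M := (abs_nonneg _).trans (hM 0)
  have hpp := pi_pow_le hp1 hp2
  have hp0 : 0 ≤ π ^ (p - 1) := by positivity
  have hs := sp_cont hp1
  have hP := prim_cont hG
  have e1 := ibp hG hp1 e x (K := sp p) (k := ds p) hs (fun w hw => sp_deriv hp1 hw) (ds_int hp1)
  have e2 := ibp hG hp1 0 x (K := sp p) (k := ds p) hs (fun w hw => sp_deriv hp1 hw) (ds_int hp1)
  simp only [zero_mul, sub_zero, add_zero, sp_neg, sp_of_nonneg hp1 Real.pi_pos.le] at e1 e2
  have t1 := prim_lip hG hM (x + π) (x + π - e * π ^ (p - 1))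
  have t2 := prim_lip hG hM (x - π) (x - π + e * π ^ (p - 1))
  rw [show x + π - e * π ^ (p - 1) - (x + π) = - (e * π ^ (p - 1)) by ring, abs_neg,
    abs_of_nonneg (by positivity : 0 ≤ e * π ^ (p - 1))] at t1
  rw [add_sub_cancel_left, abs_of_nonneg (by positivity : 0 ≤ e * π ^ (p - 1))] at t2
  have hb : π ^ (p - 1) * (M * (e * π ^ (p - 1))) ≤ π * (M * (e * π)) := by gcongr
  have t1' : |π ^ (p - 1) * (prim G (x + π - e * π ^ (p - 1)) - prim G (x + π))| ≤ π * (M * (e * π)) := by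
    rw [abs_mul, abs_of_nonneg hp0]
    exact (mul_le_mul_of_nonneg_left t1 hp0).trans hb
  have t2' : |π ^ (p - 1) * (prim G (x - π + e * π ^ (p - 1)) - prim G (x - π))| ≤ π * (M * (e * π)) := by
    rw [abs_mul, abs_of_nonneg hp0]
    exact (mul_le_mul_of_nonneg_left t2 hp0).trans hb
  have hd : |∫ w in (-π)..π, ds p w * (prim G (x + w - e * sp p w) - prim G (x + w))|
      ≤ 2 * π ^ (p - 1) * (M * (e * π)) := abs_ds_int_le hp1 fun w hw => by
    refine (prim_lip hG hM _ _).trans ?_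
    have hsw := abs_sp_le hp1 hp2 (abs_le.2 hw)
    rw [show x + w - e * sp p w - (x + w) = - (e * sp p w) by ring, abs_neg, abs_mul,
      abs_of_pos he]
    gcongr
  have hsplit : (∫ w in (-π)..π, ds p w * (prim G (x + w - e * sp p w) - prim G (x + w)))
      = (∫ w in (-π)..π, ds p w * prim G (x + w - e * sp p w))
        - ∫ w in (-π)..π, ds p w * prim G (x + w) := by
    simp only [mul_sub]
    exact intervalIntegral.integral_sub ((ds_int hp1).mul_continuousOn (by fun_prop))
      ((ds_int hp1).mul_continuousOn (by fun_prop))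
  have hd1 : 2 * π ^ (p - 1) * (M * (e * π)) ≤ 2 * π * (M * (e * π)) := by gcongr
  have hf : |∫ w in (-π)..π, ds p w * (sp p w * G (x + w - e * sp p w))|
      ≤ 2 * π ^ (p - 1) * (π * M) := abs_ds_int_le hp1 fun w hw => by
    rw [abs_mul]
    exact mul_le_mul (abs_sp_le hp1 hp2 (abs_le.2 hw)) (hM _) (abs_nonneg _) hpi.le
  have hf2 : |e * ∫ w in (-π)..π, ds p w * (sp p w * G (x + w - e * sp p w))|
      ≤ e * (2 * π * (π * M)) := by
    rw [abs_mul, abs_of_pos he]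
    refine mul_le_mul_of_nonneg_left (hf.trans ?_) he.le
    gcongr
  rw [hsplit] at hd
  rw [e1, e2]
  rw [abs_le] at *
  constructor <;> nlinarith

lemma VV_taylor {p : ℝ} (hp1 : 1 < p) (hp2 : p < 2) {G : ℝ → ℝ} (hG : Continuous G) {M : ℝ}
    (hM : ∀ x, |G x| ≤ M) (hper : Function.Periodic G (2 * π)) (x t : ℝ) :
    |VV p G (x - t) - VV p G x + t * D1 p G x| ≤ 4 * M * t ^ 2 := by
  have hM0 : 0 ≤ M := (abs_nonneg _).trans (hM 0)
  have hD1 : ∀ u, |D1 p G u - D1 p G x| ≤ 4 * M * |u - x| := fun u => by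
    have := Convex.norm_image_sub_le_of_norm_hasDerivWithin_le (s := univ) (f := D1 p G)
      (f' := D2 p G) (C := 4 * M) (x := x) (y := u)
      (fun y _ => (D1_deriv hp1 hG hM hper y).hasDerivWithinAt)
      (fun y _ => D2_bound hp1 hp2 hM y) convex_univ (mem_univ _) (mem_univ _)
    exact this
  have := Convex.norm_image_sub_le_of_norm_hasDerivWithin_le (s := uIcc x (x - t))
    (f := fun u => VV p G u - u * D1 p G x)
    (f' := fun u => D1 p G u - 1 * D1 p G x) (C := 4 * M * |t|) (x := x) (y := x - t)
    (fun y _ => ((VV_deriv hp1 hG hM hper y).sub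
      ((hasDerivAt_id y).mul_const _)).hasDerivWithinAt)
    (fun y hy => by
      rw [one_mul]
      refine (hD1 y).trans ?_
      have := abs_sub_left_of_mem_uIcc hy
      rw [show x - t - x = -t by ring, abs_neg] at this
      gcongr) (convex_uIcc _ _) left_mem_uIcc right_mem_uIcc
  simp only [Real.norm_eq_abs] at this
  rw [show x - t - x = -t by ring, abs_neg, mul_assoc, ← pow_two, sq_abs] at this
  convert this using 2
  ring

lemma VV_lip {p : ℝ} (hp1 : 1 < p) (hp2 : p < 2) {G : ℝ → ℝ} (hG : Continuous G) {M : ℝ}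
    (hM : ∀ x, |G x| ≤ M) (hper : Function.Periodic G (2 * π)) (x u : ℝ) :
    |VV p G u - VV p G x| ≤ 2 * π * M * |u - x| :=
  Convex.norm_image_sub_le_of_norm_hasDerivWithin_le (s := univ) (f := VV p G)
      (f' := D1 p G) (C := 2 * π * M) (x := x) (y := u)
      (fun y _ => (VV_deriv hp1 hG hM hper y).hasDerivWithinAt)
      (fun y _ => D1_bound hp1 hp2 hM y) convex_univ (mem_univ _) (mem_univ _)

/-- the jump part of the adjoint -/
def JJ (p : ℝ) (G : ℝ → ℝ) (e β x : ℝ) : ℝ :=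
  ∫ w in (-π)..π, (Real.exp (-β * (VV p G (x - e * sp p w) - VV p G x)) * G (x + w - e * sp p w)
    - G (x + w))

/-- the adjoint on the line -/
def HH (p : ℝ) (G : ℝ → ℝ) (α β x : ℝ) : ℝ :=
  1 / 2 * (β ^ 2 * D1 p G x ^ 2 - β * D2 p G x)
    + α⁻¹ * ((2 * π)⁻¹ * JJ p G (p / 2 * α * β) β x)

lemma VV_cont {p : ℝ} (hp1 : 1 < p) {G : ℝ → ℝ} (hG : Continuous G) {M : ℝ}
    (hM : ∀ x, |G x| ≤ M) (hper : Function.Periodic G (2 * π)) : Continuous (VV p G) :=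
  continuous_iff_continuousAt.2 fun x => (VV_deriv hp1 hG hM hper x).continuousAt

lemma D1_cont {p : ℝ} (hp1 : 1 < p) {G : ℝ → ℝ} (hG : Continuous G) {M : ℝ}
    (hM : ∀ x, |G x| ≤ M) (hper : Function.Periodic G (2 * π)) : Continuous (D1 p G) :=
  continuous_iff_continuousAt.2 fun x => (D1_deriv hp1 hG hM hper x).continuousAt

lemma JJ_cont {p : ℝ} (hp1 : 1 < p) {G : ℝ → ℝ} (hG : Continuous G) {M : ℝ}
    (hM : ∀ x, |G x| ≤ M) (hper : Function.Periodic G (2 * π)) (e β : ℝ) :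
    Continuous (JJ p G e β) := by
  have hV := VV_cont hp1 hG hM hper
  have hs := sp_cont hp1
  unfold JJ
  apply intervalIntegral.continuous_parametric_intervalIntegral_of_continuous'
  simp only [Function.uncurry_def]
  fun_prop

lemma HH_cont {p : ℝ} (hp1 : 1 < p) {G : ℝ → ℝ} (hG : Continuous G) {M : ℝ}
    (hM : ∀ x, |G x| ≤ M) (hper : Function.Periodic G (2 * π)) (α β : ℝ) :
    Continuous (HH p G α β) := by
  have h1 := D1_cont hp1 hG hM hper
  have h2 := D2_cont hp1 hG hM
  have h3 := JJ_cont hp1 hG hM hper (p / 2 * α * β) β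
  unfold HH
  fun_prop

lemma R_bound {p : ℝ} (hp1 : 1 < p) (hp2 : p < 2) {G : ℝ → ℝ} (hG : Continuous G) {M : ℝ}
    (hM : ∀ x, |G x| ≤ M) (hper : Function.Periodic G (2 * π)) {α β : ℝ} (hβ : 1 ≤ β)
    (hα : 0 < α) (hE : 2 * π ^ 2 * M * (α * β ^ 2) ≤ 1) {e : ℝ} (he : 0 < e) (heα : e ≤ α * β)
    (x w : ℝ) (hw : |w| ≤ π) :
    |Real.exp (-β * (VV p G (x - e * sp p w) - VV p G x)) - 1 - β * e * sp p w * D1 p G x|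
      ≤ (4 * π ^ 4 * M ^ 2 + 4 * π ^ 2 * M) * (α ^ 2 * β ^ 4) := by
  have hpi := Real.pi_pos
  have hM0 : 0 ≤ M := (abs_nonneg _).trans (hM 0)
  have hsw := abs_sp_le hp1 hp2 hw
  set E := -β * (VV p G (x - e * sp p w) - VV p G x) with hEd
  have hEb : |E| ≤ 2 * π ^ 2 * M * (α * β ^ 2) := by
    have h1 := VV_lip hp1 hp2 hG hM hper x (x - e * sp p w)
    rw [show x - e * sp p w - x = - (e * sp p w) by ring, abs_neg, abs_mul, abs_of_pos he] at h1
    rw [hEd, abs_mul, abs_neg, abs_of_pos (by linarith)]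
    calc β * _ ≤ β * (2 * π * M * (e * |sp p w|)) := by gcongr
      _ ≤ β * (2 * π * M * ((α * β) * π)) := by gcongr
      _ = _ := by ring
  have h2 := Real.abs_exp_sub_one_sub_id_le (hEb.trans hE)
  have h3 : E ^ 2 ≤ (2 * π ^ 2 * M * (α * β ^ 2)) ^ 2 := sq_le_sq' (by linarith [(abs_le.1 hEb).1]) (abs_le.1 hEb).2
  have h4 : |E - β * e * sp p w * D1 p G x| ≤ 4 * π ^ 2 * M * (α ^ 2 * β ^ 4) := by
    have h5 := VV_taylor hp1 hp2 hG hM hper x (e * sp p w)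
    have h6 : E - β * e * sp p w * D1 p G x
        = -β * (VV p G (x - e * sp p w) - VV p G x + e * sp p w * D1 p G x) := by rw [hEd]; ring
    rw [h6, abs_mul, abs_neg, abs_of_pos (by linarith)]
    have h7 : (e * sp p w) ^ 2 ≤ ((α * β) * π) ^ 2 := by
      rw [← sq_abs, abs_mul, abs_of_pos he]
      gcongr
    calc β * _ ≤ β * (4 * M * ((α * β) * π) ^ 2) := by
          gcongr; exact h5.trans (by gcongr)
      _ = 4 * π ^ 2 * M * (α ^ 2 * β ^ 3) := by ring
      _ ≤ _ := by gcongr; norm_num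
  have h8 : (2 * π ^ 2 * M * (α * β ^ 2)) ^ 2 = 4 * π ^ 4 * M ^ 2 * (α ^ 2 * β ^ 4) := by ring
  rw [abs_le] at *
  constructor <;> nlinarith

lemma HH_bound {p : ℝ} (hp1 : 1 < p) (hp2 : p < 2) {G : ℝ → ℝ} (hG : Continuous G) {M : ℝ}
    (hM : ∀ x, |G x| ≤ M) (hper : Function.Periodic G (2 * π))
    {A a : ℝ} (hA : 0 < A) (ha : 0 < a) (ha1 : a ≤ 1)
    (hH : ∀ x y, |G x - G y| ≤ A * |x - y| ^ a) {α β : ℝ} (hβ : 1 ≤ β)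
    (hα : 0 < α) (hE : 2 * π ^ 2 * M * (α * β ^ 2) ≤ 1) (x : ℝ) :
    |HH p G α β x| ≤ (12 * π ^ 3 * M ^ 2 + 2 * π * M * (4 * π ^ 4 * M ^ 2 + 4 * π ^ 2 * M))
        * (α * β ^ 4) + 4 * A * π ^ 2 * (α ^ a * β ^ (1 + a)) := by
  have hpi := Real.pi_pos
  have hM0 : 0 ≤ M := (abs_nonneg _).trans (hM 0)
  have hβ0 : 0 < β := by linarith
  set e := p / 2 * α * β with hed
  have he : 0 < e := by positivity
  have heα : e ≤ α * β := by
    have : 0 < α * β := by positivity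
    rw [hed]; nlinarith
  have hV := VV_cont hp1 hG hM hper
  have hs := sp_cont hp1
  have b0 := T0_bound hp1 hp2 hG hper hA ha ha1 hH x he
  have b1 := T1_bound hp1 hp2 hG hM x he
  have bD := D1_bound hp1 hp2 hM x
  set c := 4 * π ^ 4 * M ^ 2 + 4 * π ^ 2 * M with hc
  have hc0 : 0 ≤ c := by positivity
  have bR : |∫ w in (-π)..π, (Real.exp (-β * (VV p G (x - e * sp p w) - VV p G x)) - 1
      - β * e * sp p w * D1 p G x) * G (x + w - e * sp p w)| ≤ 2 * π * (c * (α ^ 2 * β ^ 4) * M) :=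
    abs_int_le fun w hw => by
      rw [abs_mul]
      exact mul_le_mul (R_bound hp1 hp2 hG hM hper hβ hα hE he heα x w (abs_le.2 hw)) (hM _)
        (abs_nonneg _) (by positivity)
  set IR := ∫ w in (-π)..π, (Real.exp (-β * (VV p G (x - e * sp p w) - VV p G x)) - 1
      - β * e * sp p w * D1 p G x) * G (x + w - e * sp p w) with hIR
  have hJ : JJ p G e β x = ((∫ w in (-π)..π, G (x + w - e * sp p w)) - (∫ w in (-π)..π, G (x + w)))
      + β * e * D1 p G x * (∫ w in (-π)..π, sp p w * G (x + w - e * sp p w)) + IR := by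
    rw [hIR, ← intervalIntegral.integral_const_mul, ← intervalIntegral.integral_sub,
      ← intervalIntegral.integral_add, ← intervalIntegral.integral_add]
    · unfold JJ
      congr 1
      funext w
      ring
    all_goals exact Continuous.intervalIntegrable (by fun_prop) _ _
  set I0 := ∫ w in (-π)..π, G (x + w - e * sp p w)
  set I1 := ∫ w in (-π)..π, G (x + w)
  set Q1 := ∫ w in (-π)..π, sp p w * G (x + w - e * sp p w)
  have hD1 : D1 p G x = (2 * π)⁻¹ * (-(p * ∫ w in (-π)..π, sp p w * G (x + w))) := rfl
  have hD2 : D2 p G x = (2 * π)⁻¹ * (p * ((∫ w in (-π)..π, ds p w * G (x + w))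
    - 2 * π ^ (p - 1) * G (x + π))) := rfl
  set Q := ∫ w in (-π)..π, sp p w * G (x + w)
  set S := (∫ w in (-π)..π, ds p w * G (x + w)) - 2 * π ^ (p - 1) * G (x + π)
  have hHH : HH p G α β x = (2 * π)⁻¹ * (α⁻¹ * ((I0 - I1 - e * S) + β * e * D1 p G x * (Q1 - Q) + IR)) := by
    unfold HH
    rw [← hed, hJ, hD2, hD1, hed]
    field_simp
    ring
  have hN : (2 * π)⁻¹ ≤ 1 := inv_le_one_of_one_le₀ (by linarith [Real.pi_gt_three])
  have c1 : |β * e * D1 p G x * (Q1 - Q)| ≤ 12 * π ^ 3 * M ^ 2 * (α ^ 2 * β ^ 4) := by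
    rw [abs_mul, abs_mul, abs_of_pos (by positivity : 0 < β * e)]
    calc β * e * |D1 p G x| * |Q1 - Q| ≤ β * (α * β) * (2 * π * M) * (6 * π ^ 2 * M * (α * β)) := by
          gcongr
          exact b1.trans (by gcongr)
      _ = 12 * π ^ 3 * M ^ 2 * (α ^ 2 * β ^ 3) := by ring
      _ ≤ _ := by gcongr; norm_num
  have c0 : |I0 - I1 - e * S| ≤ 4 * A * π ^ 2 * (α * (α ^ a * β ^ (1 + a))) := by
    refine b0.trans ?_
    have : e * e ^ a ≤ (α * β) * (α * β) ^ a := by gcongr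
    refine (mul_le_mul_of_nonneg_left this (by positivity)).trans (le_of_eq ?_)
    rw [Real.mul_rpow hα.le hβ0.le, Real.rpow_add hβ0, Real.rpow_one]
    ring
  have habs : |(I0 - I1 - e * S) + β * e * D1 p G x * (Q1 - Q) + IR| ≤
      α * ((12 * π ^ 3 * M ^ 2 + 2 * π * M * c)
        * (α * β ^ 4) + 4 * A * π ^ 2 * (α ^ a * β ^ (1 + a))) := by
    refine (abs_add_three _ _ _).trans ?_
    refine (add_le_add (add_le_add c0 c1) bR).trans (le_of_eq ?_)
    ring
  rw [hHH, abs_mul, abs_mul, abs_of_pos (by positivity : 0 < (2 * π)⁻¹), abs_of_pos (by positivity : 0 < α⁻¹)]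
  calc _ ≤ 1 * (α⁻¹ * (α * ((12 * π ^ 3 * M ^ 2 + 2 * π * M * c)
        * (α * β ^ 4) + 4 * A * π ^ 2 * (α ^ a * β ^ (1 + a))))) := by gcongr
    _ = _ := by field_simp

lemma swap_cont {f : ℝ → ℝ → ℝ} (hf : Continuous (Function.uncurry f)) :
    ∫ x in (-π)..π, ∫ w in (-π)..π, f x w = ∫ w in (-π)..π, ∫ x in (-π)..π, f x w := by
  apply intervalIntegral_intervalIntegral_swap
  refine (hf.continuousOn.integrableOn_compact
    (isCompact_uIcc.prod isCompact_uIcc : IsCompact (uIcc (-π) π ×ˢ uIcc (-π) π))).mono_set ?_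
  exact prod_mono uIoc_subset_uIcc uIoc_subset_uIcc

lemma shift_per {f : ℝ → ℝ} (hf : Function.Periodic f (2 * π)) (t : ℝ) :
    ∫ x in (-π)..π, f (x + t) = ∫ x in (-π)..π, f x := by
  rw [intervalIntegral.integral_comp_add_right]
  have := hf.intervalIntegral_add_eq (-π + t) (-π)
  rw [show -π + t + 2 * π = π + t by ring, show -π + 2 * π = π by ring] at this
  exact this

lemma VV_per {p : ℝ} {G : ℝ → ℝ} (hper : Function.Periodic G (2 * π)) :
    Function.Periodic (VV p G) (2 * π) := by
  intro x
  unfold VV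
  have : ∀ w, G (x + 2 * π + w) = G (x + w) := fun w => by
    rw [← hper (x + w)]; congr 1; ring
  simp only [this]

lemma D1_per {p : ℝ} {G : ℝ → ℝ} (hper : Function.Periodic G (2 * π)) :
    Function.Periodic (D1 p G) (2 * π) := by
  intro x
  unfold D1
  have : ∀ w, G (x + 2 * π + w) = G (x + w) := fun w => by
    rw [← hper (x + w)]; congr 1; ring
  simp only [this]

lemma per_pi {f : ℝ → ℝ} (hf : Function.Periodic f (2 * π)) : f π = f (-π) := by
  rw [← hf (-π)]; congr 1; ring

lemma dualA {p : ℝ} (hp1 : 1 < p) {G : ℝ → ℝ} (hG : Continuous G) {M : ℝ}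
    (hM : ∀ x, |G x| ≤ M) (hper : Function.Periodic G (2 * π)) (β : ℝ) {φ : ℝ → ℝ}
    (hφ : Function.Periodic φ (2 * π)) (hφ2 : ContDiff ℝ 2 φ) :
    ∫ x in (-π)..π, Real.exp (-β * VV p G x) * deriv (deriv φ) x
      = ∫ x in (-π)..π, ((β ^ 2 * D1 p G x ^ 2 - β * D2 p G x) * Real.exp (-β * VV p G x)) * φ x := by
  have hV := VV_cont hp1 hG hM hper
  have h1 := D1_cont hp1 hG hM hper
  have h2 := D2_cont (p := p) hp1 hG hM
  have f1 : ContDiff ℝ 1 (deriv φ) := by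
    have : ContDiff ℝ (1 + 1) φ := by simpa [one_add_one_eq_two] using hφ2
    exact (contDiff_succ_iff_deriv.1 this).2.2
  have c0 : Continuous φ := hφ2.continuous
  have c1 : Continuous (deriv φ) := f1.continuous
  have c2 : Continuous (deriv (deriv φ)) := f1.continuous_deriv le_rfl
  have d0 : ∀ x, HasDerivAt φ (deriv φ x) x := fun x =>
    (hφ2.differentiable (by norm_num) x).hasDerivAt
  have d1 : ∀ x, HasDerivAt (deriv φ) (deriv (deriv φ) x) x := fun x =>
    (f1.differentiable (by norm_num) x).hasDerivAt
  have per1 : Function.Periodic (deriv φ) (2 * π) := by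
    intro x
    rw [← deriv_comp_add_const]
    congr 1
    funext y
    exact hφ y
  have m0 : ∀ x, HasDerivAt (fun x => Real.exp (-β * VV p G x))
      (-β * D1 p G x * Real.exp (-β * VV p G x)) x := fun x => by
    refine (((VV_deriv hp1 hG hM hper x).const_mul (-β)).exp).congr_deriv ?_
    ring
  have m1 : ∀ x, HasDerivAt (fun x => -β * D1 p G x * Real.exp (-β * VV p G x))
      ((β ^ 2 * D1 p G x ^ 2 - β * D2 p G x) * Real.exp (-β * VV p G x)) x := fun x => by
    refine (((D1_deriv hp1 hG hM hper x).const_mul (-β)).mul (m0 x)).congr_deriv ?_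
    ring
  rw [intervalIntegral.integral_mul_deriv_eq_deriv_mul (fun x _ => m0 x) (fun x _ => d1 x)
    (Continuous.intervalIntegrable (by fun_prop) _ _) (Continuous.intervalIntegrable (by fun_prop) _ _),
    intervalIntegral.integral_mul_deriv_eq_deriv_mul (fun x _ => m1 x) (fun x _ => d0 x)
    (Continuous.intervalIntegrable (by fun_prop) _ _) (Continuous.intervalIntegrable (by fun_prop) _ _),
    per_pi (VV_per hper), per_pi (D1_per hper), per_pi hφ, per_pi per1]
  ring

lemma dualB {p : ℝ} (hp1 : 1 < p) {G : ℝ → ℝ} (hG : Continuous G) {M : ℝ}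
    (hM : ∀ x, |G x| ≤ M) (hper : Function.Periodic G (2 * π)) (e β : ℝ) {φ : ℝ → ℝ}
    (hφ : Function.Periodic φ (2 * π)) (c0 : Continuous φ) :
    ∫ x in (-π)..π, Real.exp (-β * VV p G x) *
        ∫ w in (-π)..π, (φ (x + e * sp p w) - φ x) * G (x + w)
      = ∫ x in (-π)..π, Real.exp (-β * VV p G x) * (JJ p G e β x * φ x) := by
  have hV := VV_cont hp1 hG hM hper
  have hs := sp_cont hp1
  have hVp := VV_per (p := p) hper
  unfold JJ
  have q1 : ∀ x, Real.exp (-β * VV p G x) *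
        (∫ w in (-π)..π, (φ (x + e * sp p w) - φ x) * G (x + w))
      = ∫ w in (-π)..π, Real.exp (-β * VV p G x) * ((φ (x + e * sp p w) - φ x) * G (x + w)) :=
    fun x => (intervalIntegral.integral_const_mul _ _).symm
  have q2 : ∀ x, Real.exp (-β * VV p G x) * ((∫ w in (-π)..π,
        (Real.exp (-β * (VV p G (x - e * sp p w) - VV p G x)) * G (x + w - e * sp p w)
          - G (x + w))) * φ x)
      = ∫ w in (-π)..π, Real.exp (-β * VV p G x) *
        ((Real.exp (-β * (VV p G (x - e * sp p w) - VV p G x)) * G (x + w - e * sp p w)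
          - G (x + w)) * φ x) := fun x => by
    rw [intervalIntegral.integral_const_mul, intervalIntegral.integral_mul_const]
  simp only [q1, q2]
  refine (swap_cont (by simp only [Function.uncurry_def]; fun_prop)).trans (Eq.trans ?_
    (swap_cont (by simp only [Function.uncurry_def]; fun_prop)).symm)
  congr 1
  funext w
  have key := shift_per (f := fun y => Real.exp (-β * VV p G (y - e * sp p w)) *
    (φ y * G (y + w - e * sp p w))) (fun y => by
      simp only
      rw [show y + 2 * π - e * sp p w = y - e * sp p w + 2 * π by ring, hVp, hφ,
        show y + 2 * π + w - e * sp p w = y + w - e * sp p w + 2 * π by ring, hper]) (e * sp p w)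
  have l : ∀ x, Real.exp (-β * VV p G x) * ((φ (x + e * sp p w) - φ x) * G (x + w))
      = Real.exp (-β * VV p G (x + e * sp p w - e * sp p w)) *
    (φ (x + e * sp p w) * G (x + e * sp p w + w - e * sp p w))
      - Real.exp (-β * VV p G x) * (φ x * G (x + w)) := fun x => by
    rw [add_sub_cancel_right, show x + e * sp p w + w - e * sp p w = x + w by ring]
    ring
  have r : ∀ x, Real.exp (-β * VV p G x) * ((Real.exp (-β * (VV p G (x - e * sp p w) - VV p G x)) * G (x + w - e * sp p w)
    - G (x + w)) * φ x) = Real.exp (-β * VV p G (x - e * sp p w)) *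
    (φ x * G (x + w - e * sp p w)) - Real.exp (-β * VV p G x) * (φ x * G (x + w)) := fun x => by
    rw [show -β * VV p G (x - e * sp p w) = -β * VV p G x + -β * (VV p G (x - e * sp p w) - VV p G x) by ring,
      Real.exp_add]
    ring
  simp only [l, r]
  rw [intervalIntegral.integral_sub, intervalIntegral.integral_sub, key]
  all_goals exact Continuous.intervalIntegrable (by fun_prop) _ _

lemma dual {p : ℝ} (hp1 : 1 < p) {G : ℝ → ℝ} (hG : Continuous G) {M : ℝ}
    (hM : ∀ x, |G x| ≤ M) (hper : Function.Periodic G (2 * π)) (α β : ℝ) {φ : ℝ → ℝ}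
    (hφ : Function.Periodic φ (2 * π)) (hφ2 : ContDiff ℝ 2 φ) :
    ∫ x in (-π)..π, Real.exp (-β * VV p G x) * (1 / 2 * deriv (deriv φ) x + α⁻¹ * ((2 * π)⁻¹ *
        ∫ w in (-π)..π, (φ (x + p / 2 * α * β * sp p w) - φ x) * G (x + w)))
      = ∫ x in (-π)..π, Real.exp (-β * VV p G x) * (φ x * HH p G α β x) := by
  have hV := VV_cont hp1 hG hM hper
  have hs := sp_cont hp1
  have h1 := D1_cont hp1 hG hM hper
  have h2 := D2_cont (p := p) hp1 hG hM
  have h3 := JJ_cont hp1 hG hM hper (p / 2 * α * β) β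
  have f1 : ContDiff ℝ 1 (deriv φ) := by
    have : ContDiff ℝ (1 + 1) φ := by simpa [one_add_one_eq_two] using hφ2
    exact (contDiff_succ_iff_deriv.1 this).2.2
  have c0 : Continuous φ := hφ2.continuous
  have c2 : Continuous (deriv (deriv φ)) := f1.continuous_deriv le_rfl
  have a1 := dualA hp1 hG hM hper β hφ hφ2
  have a2 := dualB hp1 hG hM hper (p / 2 * α * β) β hφ c0
  have c3 : Continuous fun x => ∫ w in (-π)..π, (φ (x + p / 2 * α * β * sp p w) - φ x) * G (x + w) := by
    apply intervalIntegral.continuous_parametric_intervalIntegral_of_continuous'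
    simp only [Function.uncurry_def]
    fun_prop
  have l : ∀ x, Real.exp (-β * VV p G x) * (1 / 2 * deriv (deriv φ) x + α⁻¹ * ((2 * π)⁻¹ *
        ∫ w in (-π)..π, (φ (x + p / 2 * α * β * sp p w) - φ x) * G (x + w)))
      = 1 / 2 * (Real.exp (-β * VV p G x) * deriv (deriv φ) x)
        + α⁻¹ * (2 * π)⁻¹ * (Real.exp (-β * VV p G x) *
        ∫ w in (-π)..π, (φ (x + p / 2 * α * β * sp p w) - φ x) * G (x + w)) := fun x => by ring
  have r : ∀ x, Real.exp (-β * VV p G x) * (φ x * HH p G α β x)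
      = 1 / 2 * (((β ^ 2 * D1 p G x ^ 2 - β * D2 p G x) * Real.exp (-β * VV p G x)) * φ x)
        + α⁻¹ * (2 * π)⁻¹ * (Real.exp (-β * VV p G x) * (JJ p G (p / 2 * α * β) β x * φ x)) := fun x => by
    unfold HH; ring
  simp only [l, r]
  rw [intervalIntegral.integral_add, intervalIntegral.integral_add,
    intervalIntegral.integral_const_mul, intervalIntegral.integral_const_mul,
    intervalIntegral.integral_const_mul, intervalIntegral.integral_const_mul, a1, a2]
  all_goals exact Continuous.intervalIntegrable (by fun_prop) _ _

lemma int_lam (f : 𝕋 → ℝ) (x : ℝ) :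
    ∫ z, f z ∂lam = (2 * π)⁻¹ * ∫ w in (-π)..π, f ((x + w : ℝ) : 𝕋) := by
  have h := AddCircle.intervalIntegral_preimage (2 * π) (x - π) f
  have h2 := intervalIntegral.integral_comp_add_left (a := -π) (b := π)
    (fun y : ℝ => f (y : 𝕋)) x
  rw [h2, show x + -π = x - π by ring, show x + π = x - π + 2 * π by ring, h]
  unfold lam
  rw [integral_smul_measure, ENNReal.toReal_inv, ENNReal.toReal_ofReal Real.two_pi_pos.le]
  rfl

lemma rep_coe {w : ℝ} (hw : w ∈ Ioc (-π) π) : rep (w : 𝕋) = w := by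
  unfold rep
  have hw' : w ∈ Ioc (-π) (-π + 2 * π) := ⟨hw.1, by linarith [hw.2]⟩
  rw [AddCircle.equivIoc_coe_eq hw']

lemma coe_rep (z : 𝕋) : ((rep z : ℝ) : 𝕋) = z := by
  unfold rep
  exact AddCircle.coe_equivIoc

lemma rep_meas : Measurable rep :=
  measurable_subtype_coe.comp (AddCircle.measurableEquivIoc (2 * π) (-π)).measurable

lemma norm_coe_of {w : ℝ} (hw : |w| ≤ π) : ‖(w : 𝕋)‖ = |w| := by
  refine (AddCircle.norm_coe_eq_abs_iff (2 * π) Real.two_pi_pos.ne').2 ?_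
  rw [abs_of_pos Real.two_pi_pos]
  linarith

lemma norm_le_pi (z : 𝕋) : ‖z‖ ≤ π := by
  have := AddCircle.norm_le_half_period (2 * π) (x := z) Real.two_pi_pos.ne'
  rw [abs_of_pos Real.two_pi_pos] at this
  linarith

lemma norm_coe_le (w : ℝ) : ‖(w : 𝕋)‖ ≤ |w| := by
  rcases le_total |w| π with h | h
  · exact (norm_coe_of h).le
  · exact (norm_le_pi _).trans h

lemma dist_shift (x w : ℝ) (hw : |w| ≤ π) : dist (x : 𝕋) ((x + w : ℝ) : 𝕋) = |w| := by
  rw [dist_eq_norm, ← norm_neg, neg_sub, ← AddCircle.coe_sub, add_sub_cancel_left, norm_coe_of hw]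

lemma holder_cont {g : 𝕋 → ℝ} {A a : ℝ} (ha : 0 < a)
    (hH : ∀ x y : 𝕋, |g x - g y| ≤ A * dist x y ^ a) : Continuous g := by
  rw [continuous_iff_continuousAt]
  intro x
  rw [ContinuousAt, tendsto_iff_dist_tendsto_zero]
  refine squeeze_zero (fun _ => dist_nonneg) (fun y => hH y x) ?_
  have : Continuous fun y : 𝕋 => A * dist y x ^ a :=
    continuous_const.mul ((continuous_id.dist continuous_const).rpow_const fun _ => Or.inr ha.le)
  have h := this.tendsto x
  simpa [Real.zero_rpow ha.ne'] using h

lemma int_nu {g : 𝕋 → ℝ} (hg : Continuous g) (hg0 : ∀ x, 0 ≤ g x) (f : 𝕋 → ℝ) (x : ℝ) :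
    ∫ z, f z ∂(lam.withDensity fun y => ENNReal.ofReal (g y))
      = (2 * π)⁻¹ * ∫ w in (-π)..π, f ((x + w : ℝ) : 𝕋) * g ((x + w : ℝ) : 𝕋) := by
  rw [integral_withDensity_eq_integral_toReal_smul hg.measurable.ennreal_ofReal (by simp),
    int_lam _ x]
  congr 2
  funext w
  rw [ENNReal.toReal_ofReal (hg0 _), smul_eq_mul, mul_comm]

/-- Proposition `mbl2`: for `p ∈ (1,2)` and a Hölder density, there are constants
`σ ∈ (0,1/2)` and `C`, depending only on `p` and `A`, such that for `β ≥ 1` and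
`0 < α < σβ⁻²` the adjoint of `L_{α,β}` in `L²(μ_β)` applied to `𝟙` (i.e. the function `h`
representing `φ ↦ ∫ L_{α,β}φ dμ_β`) satisfies
`ess sup |h| ≤ C max(αβ⁴, α^{p-1}β^{1+p}, α^a β^{1+a})`. -/
theorem adjoint_one_estimate_p_between_one_two
    (p : ℝ) (hp1 : 1 < p) (hp2 : p < 2) (A : ℝ) (hA : 0 < A) :
    ∃ σ C : ℝ, 0 < σ ∧ σ < 1 / 2 ∧ 0 < C ∧
      ∀ (a : ℝ), 0 < a → a ≤ 1 →
      ∀ (g : 𝕋 → ℝ) (ν : Measure 𝕋), IsProbabilityMeasure ν →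
        ν = lam.withDensity (fun y => ENNReal.ofReal (g y)) →
        (∀ x, 0 ≤ g x) →
        (∀ x y : 𝕋, |g x - g y| ≤ A * dist x y ^ a) →
      ∀ (β α : ℝ), 1 ≤ β → 0 < α → α < σ * β⁻¹ ^ 2 →
      ∃ h : 𝕋 → ℝ, Measurable h ∧
        (∀ᵐ x ∂lam,
          |h x| ≤ C * max (α * β ^ 4) (max (α ^ (p - 1) * β ^ (1 + p)) (α ^ a * β ^ (1 + a)))) ∧
        ∀ φ : ℝ → ℝ, Function.Periodic φ (2 * π) → ContDiff ℝ 2 φ →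
          ∫ z, genp p ν α β φ z ∂(gibbsp p ν β) = ∫ z, φ (rep z) * h z ∂(gibbsp p ν β) := by
  have hpi := Real.pi_pos
  obtain ⟨M, hMd⟩ : ∃ M, M = 1 + A * π := ⟨_, rfl⟩
  have hM0 : 0 < M := by rw [hMd]; positivity
  obtain ⟨C1, hC1⟩ : ∃ C1, C1 = 12 * π ^ 3 * M ^ 2 + 2 * π * M * (4 * π ^ 4 * M ^ 2 + 4 * π ^ 2 * M) :=
    ⟨_, rfl⟩
  have hC1p : 0 < C1 := by rw [hC1]; positivity
  refine ⟨(4 + 2 * π ^ 2 * M)⁻¹, C1 + 4 * A * π ^ 2, by positivity, ?_, by positivity, ?_⟩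
  · rw [inv_lt_comm₀ (by positivity) (by norm_num)]
    have : 0 < 2 * π ^ 2 * M := by positivity
    norm_num
    linarith
  intro a ha ha1 g ν hν hνg hg0 hH β α hβ hα hαβ
  have hβ0 : 0 < β := by linarith
  have hg := holder_cont ha hH
  obtain ⟨G, hGd⟩ : ∃ G : ℝ → ℝ, G = fun x : ℝ => g (x : 𝕋) := ⟨_, rfl⟩
  have hGa : ∀ x : ℝ, g (x : 𝕋) = G x := fun x => by rw [hGd]
  have hG : Continuous G := by
    rw [hGd]; exact hg.comp (AddCircle.continuous_mk' _)
  have hper : Function.Periodic G (2 * π) := fun x => by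
    rw [hGd]; simp only; rw [AddCircle.coe_add_period]
  have hGH : ∀ x y, |G x - G y| ≤ A * |x - y| ^ a := fun x y => by
    rw [← hGa, ← hGa]
    refine (hH _ _).trans (mul_le_mul_of_nonneg_left ?_ hA.le)
    refine Real.rpow_le_rpow dist_nonneg ?_ ha.le
    rw [dist_eq_norm, ← AddCircle.coe_sub]
    exact norm_coe_le _
  have hnu : ∀ (f : 𝕋 → ℝ) (x : ℝ), ∫ z, f z ∂ν
      = (2 * π)⁻¹ * ∫ w in (-π)..π, f ((x + w : ℝ) : 𝕋) * G (x + w) := fun f x => by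
    rw [hνg, int_nu hg hg0 f x]
    simp only [hGa]
  have hmass : (2 * π)⁻¹ * ∫ w in (-π)..π, G w = 1 := by
    have := hnu (fun _ => 1) 0
    simpa using this.symm
  have hM : ∀ x, |G x| ≤ M := fun x => by
    rw [← hGa, abs_of_nonneg (hg0 _)]
    have hb : ∀ w, G x ≤ G w + A * π := fun w => by
      have h1 := hH (x : 𝕋) (w : 𝕋)
      have h2 : dist (x : 𝕋) (w : 𝕋) ^ a ≤ π := by
        calc dist (x : 𝕋) (w : 𝕋) ^ a ≤ π ^ a :=
              Real.rpow_le_rpow dist_nonneg (by rw [dist_eq_norm]; exact norm_le_pi _) ha.le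
          _ ≤ π ^ (1 : ℝ) := Real.rpow_le_rpow_of_exponent_le (by linarith [Real.pi_gt_three]) ha1
          _ = π := Real.rpow_one _
      have h3 := mul_le_mul_of_nonneg_left h2 hA.le
      rw [hGa, hGa] at h1
      linarith [(abs_le.1 h1).2]
    have h4 : ∫ w in (-π)..π, G x ≤ ∫ w in (-π)..π, (G w + A * π) :=
      intervalIntegral.integral_mono_on (by linarith) (by simp)
        ((hG.add continuous_const).intervalIntegrable _ _) (fun w _ => hb w)
    rw [intervalIntegral.integral_add (hG.intervalIntegrable _ _) (by simp)] at h4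
    simp only [intervalIntegral.integral_const, smul_eq_mul] at h4
    have h5 : ∫ w in (-π)..π, G w = 2 * π := by
      field_simp at hmass; linarith
    rw [h5] at h4
    rw [hGa, hMd]
    have h6 : 2 * π * G x ≤ 2 * π * (1 + A * π) := by nlinarith
    exact le_of_mul_le_mul_left h6 (by positivity)
  have hE : 2 * π ^ 2 * M * (α * β ^ 2) ≤ 1 := by
    have h1 : α * β ^ 2 ≤ (4 + 2 * π ^ 2 * M)⁻¹ := by
      have := mul_le_mul_of_nonneg_right hαβ.le (by positivity : 0 ≤ β ^ 2)
      refine this.trans (le_of_eq ?_)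
      field_simp
    calc 2 * π ^ 2 * M * (α * β ^ 2) ≤ 2 * π ^ 2 * M * (4 + 2 * π ^ 2 * M)⁻¹ := by gcongr
      _ ≤ 1 := by
        rw [← div_eq_mul_inv, div_le_one (by positivity)]
        linarith
  have hUp : ∀ x : ℝ, Up p ν (x : 𝕋) = VV p G x := fun x => by
    unfold Up VV
    rw [hnu _ x]
    congr 1
    refine intervalIntegral.integral_congr fun w hw => ?_
    rw [uIcc_of_le (by linarith)] at hw
    rw [dist_shift x w (abs_le.2 hw)]
  have hV := VV_cont hp1 hG hM hper
  have hUm : Measurable (Up p ν) := by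
    have : Up p ν = fun z => VV p G (rep z) := by
      funext z
      rw [← hUp, coe_rep]
    rw [this]
    exact hV.measurable.comp rep_meas
  have hZ : 0 ≤ Zp p ν β := integral_nonneg fun _ => (Real.exp_pos _).le
  have hgibbs : ∀ f : 𝕋 → ℝ, ∫ z, f z ∂(gibbsp p ν β)
      = (2 * π)⁻¹ * ((Zp p ν β)⁻¹ * ∫ x in (-π)..π, Real.exp (-β * VV p G x) * f (x : 𝕋)) := fun f => by
    unfold gibbsp
    rw [integral_withDensity_eq_integral_toReal_smul
      (Measurable.ennreal_ofReal ((hUm.const_mul (-β)).exp.div_const _)) (by simp), int_lam _ 0,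
      ← intervalIntegral.integral_const_mul (Zp p ν β)⁻¹]
    congr 2
    funext x
    rw [ENNReal.toReal_ofReal (by positivity), zero_add, hUp, smul_eq_mul]
    ring
  refine ⟨fun z => HH p G α β (rep z), (HH_cont hp1 hG hM hper α β).measurable.comp rep_meas,
    Eventually.of_forall fun z => ?_, fun φ hφ hφ2 => ?_⟩
  · have hb := HH_bound hp1 hp2 hG hM hper hA ha ha1 hGH hβ hα hE (rep z)
    rw [← hC1] at hb
    refine hb.trans ?_
    rw [add_mul]
    refine add_le_add (mul_le_mul_of_nonneg_left (le_max_left _ _) hC1p.le)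
      (mul_le_mul_of_nonneg_left ((le_max_right _ _).trans (le_max_right _ _)) (by positivity))
  · rw [hgibbs, hgibbs]
    congr 2
    have hl : ∫ x in (-π)..π, Real.exp (-β * VV p G x) * genp p ν α β φ (x : 𝕋)
        = ∫ x in (-π)..π, Real.exp (-β * VV p G x) * (1 / 2 * deriv (deriv φ) x + α⁻¹ * ((2 * π)⁻¹ *
        ∫ w in (-π)..π, (φ (x + p / 2 * α * β * sp p w) - φ x) * G (x + w))) := by
      refine intervalIntegral.integral_congr_ae (Eventually.of_forall fun x hx => ?_)
      rw [uIoc_of_le (by linarith)] at hx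
      unfold genp
      rw [hnu _ x, rep_coe hx]
      congr 4
      refine intervalIntegral.integral_congr_ae (Eventually.of_forall fun w hw => ?_)
      rw [uIoc_of_le (by linarith)] at hw
      have hwp : |w| ≤ π := abs_le.2 ⟨hw.1.le, hw.2⟩
      have hsg : dist (x : 𝕋) ((x + w : ℝ) : 𝕋) ^ (p - 1) * sgn (x : 𝕋) ((x + w : ℝ) : 𝕋) = sp p w := by
        unfold sgn
        rw [dist_shift x w hwp, ← AddCircle.coe_sub, add_sub_cancel_left, rep_coe hw]
        split_ifs with h0
        · rw [sp_of_nonneg hp1 h0, abs_of_nonneg h0, mul_one]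
        · push Not at h0
          rw [sp_of_nonpos hp1 h0.le, abs_of_neg h0]
          ring
      rw [mul_assoc (p / 2 * α * β), hsg]
    rw [hl, dual hp1 hG hM hper α β hφ hφ2]
    refine intervalIntegral.integral_congr_ae (Eventually.of_forall fun x hx => ?_)
    rw [uIoc_of_le (by linarith)] at hx
    simp only [rep_coe hx]
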